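/- arXiv:2505.14840 — 7 statements merged into one kernel-verified Lean document; each statement's English description precedes it below -/
import Mathlib

section
/- Let 0 < ε < 1/2 and B > 0. Let w_1, …, w_n > 0, set p_j := w_j / Σ_{j'=1}^n w_{j'}, and let S ⊆ [n] be a nonempty set with Σ_{j ∉ S} p_j ≤ ε. Suppose ŵ_j > 0 for j ∈ S satisfy (1 − ε)·w_j ≤ ŵ_j ≤ (1 + ε)·w_j, and define p̂_j := ŵ_j / Σ_{j' ∈ S} ŵ_{j'} for j ∈ S and p̂_j := 0 otherwise. Then for any v_1, …, v_n ∈ ℝ with |v_j| ≤ B for all j, | Σ_{j=1}^n p̂_j v_j − Σ_{j=1}^n p_j v_j | ≤ 7εB. -/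
/-!
The error is split at the exact average over `S`, `y = (∑_S w v) / (∑_S w)`. Each half compares two
weighted averages, and both are instances of one perturbation bound (`abs_div_sub_div_le`): if the
denominator `H` of an average `A / H` bounded by `B` and its numerator `A` are changed by at most
`δ W` and `δ W B`, where `W` is the new denominator, then the average changes by at most `2 δ B`.
Replacing `w` by `what` on `S` and discarding the indices outside `S` are both such
changes with `δ = ε`, so the total error is even at most `4 ε B`.
-/

open Finset

/-- A weighted sum of numbers bounded by `B` is bounded by `B` times the total of any weights that
dominate the given ones in absolute value. -/
lemma abs_sum_mul_le {ι : Type*} (s : Finset ι) (u g v : ι → ℝ) (B : ℝ)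
    (hu : ∀ j ∈ s, |u j| ≤ g j) (hv : ∀ j, |v j| ≤ B) :
    |∑ j ∈ s, u j * v j| ≤ (∑ j ∈ s, g j) * B := by
  rw [Finset.sum_mul]
  refine (Finset.abs_sum_le_sum_abs _ _).trans (Finset.sum_le_sum fun j hj => ?_)
  rw [abs_mul]
  exact mul_le_mul (hu j hj) (hv j) (abs_nonneg _) ((abs_nonneg _).trans (hu j hj))

/-- Stability of a bounded quotient `A / H` under a change of numerator and denominator that is
small relative to the new denominator `W`. -/
lemma abs_div_sub_div_le {A H a W δ B : ℝ} (hH : 0 < H) (hW : 0 < W)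
    (hA : |A| ≤ H * B) (hHW : |W - H| ≤ δ * W) (hAa : |A - a| ≤ δ * W * B) :
    |A / H - a / W| ≤ 2 * δ * B := by
  have hx : |A / H| ≤ B := by
    rw [abs_div, abs_of_pos hH, div_le_iff₀ hH]
    linarith
  have key : A / H - a / W = (A / H * (W - H) + (A - a)) / W := by
    field_simp
    ring
  rw [key, abs_div, abs_of_pos hW, div_le_iff₀ hW]
  have h1 : |A / H * (W - H)| ≤ B * (δ * W) := by
    rw [abs_mul]
    exact mul_le_mul hx hHW (abs_nonneg _) ((abs_nonneg _).trans hx)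
  linarith [abs_add_le (A / H * (W - H)) (A - a)]

/-- If the softmax weights `w` are approximated multiplicatively within `(1 ± ε)` by `what` on
a relevant set `S` carrying all but an `ε` fraction of the softmax mass, then the resulting
approximate attention output entry is within additive error `7εB` of the exact one. -/
theorem approx_weights_output_close (n : ℕ) (ε B : ℝ) (hε0 : 0 < ε) (hε1 : ε < 1 / 2)
    (hB : 0 < B) (w : Fin n → ℝ) (hw : ∀ j, 0 < w j)
    (S : Finset (Fin n)) (hS : S.Nonempty)
    (hmass : ∑ j ∈ Sᶜ, w j / (∑ j', w j') ≤ ε)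
    (what : Fin n → ℝ) (hwhatpos : ∀ j ∈ S, 0 < what j)
    (hwhatlb : ∀ j ∈ S, (1 - ε) * w j ≤ what j)
    (hwhatub : ∀ j ∈ S, what j ≤ (1 + ε) * w j)
    (v : Fin n → ℝ) (hv : ∀ j, |v j| ≤ B) :
    |(∑ j, (if j ∈ S then what j / (∑ j' ∈ S, what j') else 0) * v j)
        - ∑ j, (w j / (∑ j', w j')) * v j| ≤ 7 * ε * B := by
  have hW : 0 < ∑ j ∈ S, w j := Finset.sum_pos (fun j _ => hw j) hS
  have hH : 0 < ∑ j ∈ S, what j := Finset.sum_pos hwhatpos hS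
  have hsplit : ∑ j ∈ S, w j + ∑ j ∈ Sᶜ, w j = ∑ j, w j := Finset.sum_add_sum_compl S w
  have hsplitv : ∑ j ∈ S, w j * v j + ∑ j ∈ Sᶜ, w j * v j = ∑ j, w j * v j :=
    Finset.sum_add_sum_compl S fun j => w j * v j
  have hr : 0 ≤ ∑ j ∈ Sᶜ, w j := Finset.sum_nonneg fun j _ => (hw j).le
  have hT : 0 < ∑ j, w j := by linarith
  have hrT : ∑ j ∈ Sᶜ, w j ≤ ε * ∑ j, w j := by
    rwa [← Finset.sum_div, div_le_iff₀ hT] at hmass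
  have hdiff : ∀ j ∈ S, |what j - w j| ≤ ε * w j := fun j hj => by
    rw [abs_le]
    constructor <;> linarith [hwhatlb j hj, hwhatub j hj]
  have hphat : ∑ j, (if j ∈ S then what j / (∑ j' ∈ S, what j') else 0) * v j
      = (∑ j ∈ S, what j * v j) / ∑ j ∈ S, what j := by
    simp only [ite_mul, zero_mul, Finset.sum_ite_mem, Finset.univ_inter, Finset.sum_div,
      div_mul_eq_mul_div]
  have hp : ∑ j, (w j / (∑ j', w j')) * v j = (∑ j, w j * v j) / ∑ j, w j := by
    simp only [Finset.sum_div, div_mul_eq_mul_div]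
  have happrox : |(∑ j ∈ S, what j * v j) / (∑ j ∈ S, what j)
      - (∑ j ∈ S, w j * v j) / ∑ j ∈ S, w j| ≤ 2 * ε * B := by
    refine abs_div_sub_div_le hH hW
      (abs_sum_mul_le S what what v B (fun j hj => (abs_of_pos (hwhatpos j hj)).le) hv) ?_ ?_
    · rw [abs_sub_comm, ← Finset.sum_sub_distrib, Finset.mul_sum]
      exact (Finset.abs_sum_le_sum_abs _ _).trans (Finset.sum_le_sum hdiff)
    · rw [← Finset.sum_sub_distrib, Finset.mul_sum]
      simpa only [sub_mul] using
        abs_sum_mul_le S (fun j => what j - w j) (fun j => ε * w j) v B hdiff hv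
  have htrunc : |(∑ j ∈ S, w j * v j) / (∑ j ∈ S, w j)
      - (∑ j, w j * v j) / ∑ j, w j| ≤ 2 * ε * B := by
    refine abs_div_sub_div_le hW hT
      (abs_sum_mul_le S w w v B (fun j _ => (abs_of_pos (hw j)).le) hv) ?_ ?_
    · rwa [← hsplit, add_sub_cancel_left, abs_of_nonneg hr, hsplit]
    · rw [← hsplitv, sub_add_cancel_left, abs_neg]
      exact (abs_sum_mul_le Sᶜ w w v B (fun j _ => (abs_of_pos (hw j)).le) hv).trans
        (mul_le_mul_of_nonneg_right hrT hB.le)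
  rw [hphat, hp]
  have hεB : 0 < ε * B := mul_pos hε0 hB
  linarith [abs_sub_le ((∑ j ∈ S, what j * v j) / ∑ j ∈ S, what j)
    ((∑ j ∈ S, w j * v j) / ∑ j ∈ S, w j) ((∑ j, w j * v j) / ∑ j, w j)]
end

section
/- There exists an absolute constant c > 0 such that for every real W > 1 and every ε with 0 < ε < 0.1, there exists a polynomial P : ℝ → ℝ of degree at most c · max(W, log(1/ε)) satisfying |P(x) − exp(x)| < ε · exp(x) for all x ∈ [−W, W]. -/
/-!
The witness is the Taylor polynomial of `exp` at `0` with `n = ⌈4W + log (1/ε) + 1⌉` terms.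
Since `n ≥ 2W`, consecutive terms of the tail at least halve, so the error on `[-W, W]` is at most
`2 Wⁿ / n!`. A single term of the series of `exp (e W)` bounds `(e W)ⁿ / n!` by `exp (e W)`, hence
`Wⁿ / n! ≤ exp (e W - n)`. As `e < 3`, the choice of `n` makes this smaller than
`(ε / 2) exp (-W) ≤ (ε / 2) exp x`.
-/

/-- The Taylor polynomial of the exponential at `0` with `n` terms (of degree less than `n` for
positive `n`). -/
noncomputable def expTaylor (n : ℕ) : Polynomial ℝ :=
  ∑ m ∈ Finset.range n, Polynomial.C (1 / (m.factorial : ℝ)) * Polynomial.X ^ m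

lemma expTaylor_natDegree_le (n : ℕ) : (expTaylor n).natDegree ≤ n := by
  refine Polynomial.natDegree_sum_le_of_forall_le _ _ fun m hm => ?_
  exact (Polynomial.natDegree_C_mul_X_pow_le _ _).trans (Finset.mem_range.1 hm).le

lemma abs_expTaylor_eval_sub_exp_le {x : ℝ} {n : ℕ} (h : |x| / n.succ ≤ 1 / 2) :
    |(expTaylor n).eval x - Real.exp x| ≤ |x| ^ n / n.factorial * 2 := by
  have key := Complex.exp_bound' (x := (x : ℂ)) (n := n) (by simpa using h)
  have e : Complex.exp x - ∑ m ∈ Finset.range n, (x : ℂ) ^ m / (m.factorial : ℂ)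
      = ((Real.exp x - (expTaylor n).eval x : ℝ) : ℂ) := by
    rw [expTaylor, Polynomial.eval_finsetSum]
    push_cast
    congr 1
    refine Finset.sum_congr rfl fun m _ => ?_
    simp only [Polynomial.eval_mul, Polynomial.eval_C, Polynomial.eval_pow, Polynomial.eval_X]
    push_cast
    ring
  rw [e, Complex.norm_real, Complex.norm_real, Real.norm_eq_abs, Real.norm_eq_abs] at key
  rwa [abs_sub_comm]

/-- Chernoff-type bound for a single Taylor coefficient. -/
lemma pow_div_factorial_le_exp_sub {W : ℝ} (hW : 0 ≤ W) (n : ℕ) :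
    W ^ n / n.factorial ≤ Real.exp (Real.exp 1 * W - n) := by
  have h := Real.pow_div_factorial_le_exp (Real.exp 1 * W) (by positivity) n
  rw [mul_pow, ← Real.exp_nat_mul, mul_one, mul_div_assoc] at h
  rw [Real.exp_sub, le_div_iff₀ (Real.exp_pos _), mul_comm]
  exact h

/-- There is an absolute constant `c > 0` such that for every `W > 1` and `0 < ε < 0.1`
there is a polynomial of degree at most `c · max(W, log(1/ε))` that multiplicatively
`ε`-approximates the exponential function on `[-W, W]`. -/
theorem exp_poly_approx :
    ∃ c : ℝ, 0 < c ∧ ∀ W ε : ℝ, 1 < W → 0 < ε → ε < 0.1 →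
      ∃ P : Polynomial ℝ, (P.natDegree : ℝ) ≤ c * max W (Real.log (1 / ε)) ∧
        ∀ x ∈ Set.Icc (-W) W, |P.eval x - Real.exp x| < ε * Real.exp x := by
  -- `n ≤ 4W + log (1/ε) + 2 ≤ 7 max (W, log (1/ε))`, using `1 < W`
  refine ⟨7, by norm_num, fun W ε hW hε hε1 => ?_⟩
  set L := Real.log (1 / ε) with hL
  have hL0 : 0 < L := Real.log_pos (by rw [lt_div_iff₀ hε]; linarith)
  have hεL : ε = Real.exp (-L) := by
    rw [hL, one_div, Real.log_inv, neg_neg, Real.exp_log hε]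
  obtain ⟨n, hn1, hn2⟩ : ∃ n : ℕ, 4 * W + L + 1 ≤ n ∧ (n : ℝ) < 4 * W + L + 2 :=
    ⟨⌈4 * W + L + 1⌉₊, Nat.le_ceil _, by
      have := Nat.ceil_lt_add_one (a := 4 * W + L + 1) (by linarith)
      linarith⟩
  refine ⟨expTaylor n, ?_, fun x hx => ?_⟩
  · have h : ((expTaylor n).natDegree : ℝ) ≤ n := by exact_mod_cast expTaylor_natDegree_le n
    linarith [le_max_left W L, le_max_right W L]
  · have hxW : |x| ≤ W := abs_le.2 hx
    have he : Real.exp 1 < 3 := Real.exp_one_lt_three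
    have h2 : (2 : ℝ) < Real.exp 1 := by linarith [Real.exp_one_gt_d9]
    calc |(expTaylor n).eval x - Real.exp x| ≤ |x| ^ n / n.factorial * 2 := by
          apply abs_expTaylor_eval_sub_exp_le
          rw [div_le_iff₀ (by positivity)]
          push_cast
          linarith
      _ ≤ W ^ n / n.factorial * 2 := by gcongr
      _ ≤ Real.exp (Real.exp 1 * W - n) * 2 := by
          gcongr
          exact pow_div_factorial_le_exp_sub (by linarith) n
      _ < Real.exp (Real.exp 1 * W - n) * Real.exp 1 := by gcongr
      _ = Real.exp (Real.exp 1 * W - n + 1) := (Real.exp_add _ _).symm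
      _ ≤ Real.exp (-L + x) := by
          apply Real.exp_le_exp.2
          nlinarith [hx.1]
      _ = ε * Real.exp x := by rw [Real.exp_add, ← hεL]
end

section
/- Let f ∈ ℝ^{n × n}, h ∈ ℝ^{n × d}, and A_2 ∈ ℝ^{n × d}. Then [f ∘ (f h h^⊤)] A_2 = Σ_{p=1}^{d} ( f (h_{*,p} ⊗_r A_2) ) ⊗_r (f h)_{*,p}. Equivalently, for all i ∈ [n] and j ∈ [d]: Σ_{ℓ=1}^n f[i,ℓ] · ( Σ_{m=1}^n f[i,m] Σ_{p=1}^d h[m,p] h[ℓ,p] ) · A_2[ℓ,j] = Σ_{p=1}^d ( Σ_{ℓ=1}^n f[i,ℓ] h[ℓ,p] A_2[ℓ,j] ) · ( Σ_{m=1}^n f[i,m] h[m,p] ). -/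
/-!
Both claims come down to the entrywise identity. Since `(f h hᵀ)[i,ℓ] = Σ_p (f h)[i,p] h[ℓ,p]`, the
matrix `f h hᵀ` is a sum of `d` rank-one terms, and exchanging the sums over `p` and `ℓ` lets the
factor `(f h)[i,p]`, which does not depend on `ℓ`, leave the product with `A₂`.
-/

open Finset Matrix

/-- Row-wise Kronecker product of a column vector with a matrix:
`(x ⊗_r M)[i,j] = x i * M i j`. -/
def rKronL {n d : ℕ} (x : Fin n → ℝ) (M : Matrix (Fin n) (Fin d) ℝ) :
    Matrix (Fin n) (Fin d) ℝ :=
  Matrix.of fun i j => x i * M i j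

/-- Row-wise Kronecker product of a matrix with a column vector:
`(M ⊗_r y)[i,j] = M i j * y i`. -/
def rKronR {n d : ℕ} (M : Matrix (Fin n) (Fin d) ℝ) (y : Fin n → ℝ) :
    Matrix (Fin n) (Fin d) ℝ :=
  Matrix.of fun i j => M i j * y i

/-- `[f ∘ (f h hᵀ)] A₂ = Σ_p (f (h_{*,p} ⊗_r A₂)) ⊗_r (f h)_{*,p}`, equivalently, for all
`i, j`: `Σ_ℓ f[i,ℓ] (Σ_m f[i,m] Σ_p h[m,p] h[ℓ,p]) A₂[ℓ,j]
  = Σ_p (Σ_ℓ f[i,ℓ] h[ℓ,p] A₂[ℓ,j]) (Σ_m f[i,m] h[m,p])`. -/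
theorem B1_decomposition {n d : ℕ} (f : Matrix (Fin n) (Fin n) ℝ)
    (h A₂ : Matrix (Fin n) (Fin d) ℝ) :
    (Matrix.hadamard f (f * h * hᵀ)) * A₂ =
      ∑ p : Fin d, rKronR (f * rKronL (fun i => h i p) A₂) (fun i => (f * h) i p) ∧
    ∀ (i : Fin n) (j : Fin d),
      (∑ ℓ, f i ℓ * (∑ m, f i m * ∑ p, h m p * h ℓ p) * A₂ ℓ j) =
        ∑ p, (∑ ℓ, f i ℓ * h ℓ p * A₂ ℓ j) * (∑ m, f i m * h m p) := by
  have entry : ∀ (i : Fin n) (j : Fin d),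
      (∑ ℓ, f i ℓ * (∑ m, f i m * ∑ p, h m p * h ℓ p) * A₂ ℓ j) =
        ∑ p, (∑ ℓ, f i ℓ * h ℓ p * A₂ ℓ j) * (∑ m, f i m * h m p) := by
    intro i j
    -- Associativity `f (h hᵀ) = (f h) hᵀ`, read off at the entry `(i, ℓ)`.
    have assoc : ∀ ℓ, (∑ m, f i m * ∑ p, h m p * h ℓ p) =
        ∑ p, (∑ m, f i m * h m p) * h ℓ p := by
      intro ℓ
      simp only [Finset.mul_sum, Finset.sum_mul]
      rw [Finset.sum_comm]
      simp only [mul_assoc]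
    -- Pull the sum over `p` outside the sum over `ℓ`, keeping `(f h)[i,p]` as one factor.
    simp_rw [assoc]
    rw [Finset.sum_congr rfl fun ℓ _ => by rw [Finset.mul_sum, Finset.sum_mul]]
    rw [Finset.sum_comm]
    refine Finset.sum_congr rfl fun p _ => ?_
    rw [Finset.sum_mul]
    exact Finset.sum_congr rfl fun ℓ _ => by ring
  refine ⟨?_, entry⟩
  ext i j
  rw [Matrix.mul_assoc, Matrix.sum_apply]
  simpa [Matrix.mul_apply, rKronL, rKronR, mul_assoc] using entry i j
end

section
/- Let f ∈ ℝ^{n × n}, h ∈ ℝ^{n × d}, E ∈ ℝ^{n × d}, and A_2 ∈ ℝ^{n × d}. Then [f ∘ (E h^⊤)] A_2 = Σ_{p=1}^{d} ( f (h_{*,p} ⊗_r A_2) ) ⊗_r E_{*,p}. Equivalently, for all i ∈ [n] and j ∈ [d]: Σ_{ℓ=1}^n f[i,ℓ] · ( Σ_{p=1}^d E[i,p] h[ℓ,p] ) · A_2[ℓ,j] = Σ_{p=1}^d ( Σ_{ℓ=1}^n f[i,ℓ] h[ℓ,p] A_2[ℓ,j] ) · E[i,p]. -/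
open Finset Matrix

/-- `[f ∘ (E hᵀ)] A₂ = Σ_p (f (h_{*,p} ⊗_r A₂)) ⊗_r E_{*,p}`, equivalently, for all
`i, j`: `Σ_ℓ f[i,ℓ] (Σ_p E[i,p] h[ℓ,p]) A₂[ℓ,j]
  = Σ_p (Σ_ℓ f[i,ℓ] h[ℓ,p] A₂[ℓ,j]) E[i,p]`. -/
theorem B2_decomposition {n d : ℕ} (f : Matrix (Fin n) (Fin n) ℝ)
    (h E A₂ : Matrix (Fin n) (Fin d) ℝ) :
    (Matrix.hadamard f (E * hᵀ)) * A₂ =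
      ∑ p : Fin d, rKronR (f * rKronL (fun i => h i p) A₂) (fun i => E i p) ∧
    ∀ (i : Fin n) (j : Fin d),
      (∑ ℓ, f i ℓ * (∑ p, E i p * h ℓ p) * A₂ ℓ j) =
        ∑ p, (∑ ℓ, f i ℓ * h ℓ p * A₂ ℓ j) * E i p := by
  have key : ∀ (i : Fin n) (j : Fin d),
      (∑ ℓ, f i ℓ * (∑ p, E i p * h ℓ p) * A₂ ℓ j) =
        ∑ p, (∑ ℓ, f i ℓ * h ℓ p * A₂ ℓ j) * E i p := by
    intro i j
    simp only [Finset.mul_sum, Finset.sum_mul]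
    rw [Finset.sum_comm]
    refine Finset.sum_congr rfl fun p _ => Finset.sum_congr rfl fun ℓ _ => ?_
    ring
  refine ⟨?_, key⟩
  ext i j
  simpa [Matrix.mul_apply, Matrix.sum_apply, rKronL, rKronR, mul_assoc] using key i j
end

section
/- Let Q, K ∈ ℝ^{n × d} and c_1, …, c_n > 0. Define the augmented matrices Q' ∈ ℝ^{(n+1) × (d+1)}, K' ∈ ℝ^{(n+1) × (d+1)}, V' ∈ ℝ^{(n+1) × (d+1)} by: Q' has i-th row (log c_i, Q_i) for i ∈ [n] and last row all zeros; K' has first row (1, 0, …, 0) and (j+1)-th row (0, K_j) for j ∈ [n]; V' has first row all zeros and every other row equal to (1, 0, …, 0). Then Q'K'^⊤ is the block matrix with (i,1)-entry log c_i and (i, j+1)-entry Q_i·K_j for i, j ∈ [n], and last row zero; and for every i ∈ [n], the (i,1)-entry of Attention(Q', K', V') equals S_i / (c_i + S_i), where S_i := Σ_{j=1}^n exp(Q_i·K_j) is the i-th row sum of exp(QK^⊤). -/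
/-!
Since the first row of `K'` is the first unit vector, pairing with it reads off the first
coordinate `log cᵢ` of a row of `Q'`, while the leading zero of each other row of `K'` cancels that
coordinate and leaves `Qᵢ·Kⱼ`. Exponentiating, row `i` of the attention matrix is
`(cᵢ, exp(Qᵢ·K₁), …, exp(Qᵢ·Kₙ))`, using `cᵢ > 0`, so its sum is `cᵢ + Sᵢ`. The first column of `V'`
is `(0, 1, …, 1)`, which drops the entry `cᵢ` from the numerator and leaves `Sᵢ`.
-/

open Finset Matrix

/-- `Attention(Q, K, V) := D⁻¹ A V` where `A := exp(QKᵀ)` entrywise and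
`D := diag(A·1)` is the diagonal matrix of row sums of `A`. -/
noncomputable def attention {m d' d : ℕ} (Q K : Matrix (Fin m) (Fin d') ℝ)
    (V : Matrix (Fin m) (Fin d) ℝ) : Matrix (Fin m) (Fin d) ℝ :=
  Matrix.of fun i t =>
    (∑ j, Real.exp ((Q * Kᵀ) i j) * V j t) / (∑ j, Real.exp ((Q * Kᵀ) i j))

/-- The augmented-matrix construction used to recover row sums of the unnormalized attention
matrix: `Q'K'ᵀ` is the block matrix with `(i,1)`-entry `log cᵢ`, `(i,j+1)`-entry `Qᵢ·Kⱼ` and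
zero last row, and the `(i,1)`-entry of `Attention(Q',K',V')` equals `Sᵢ/(cᵢ + Sᵢ)` where
`Sᵢ = Σⱼ exp(Qᵢ·Kⱼ)`. -/
theorem augmented_attention_row_sums (n d : ℕ)
    (Q K : Matrix (Fin n) (Fin d) ℝ) (c : Fin n → ℝ) (hc : ∀ i, 0 < c i) :
    let Q' : Matrix (Fin (n + 1)) (Fin (d + 1)) ℝ :=
      Matrix.of (Fin.snoc (fun i : Fin n => Fin.cons (Real.log (c i)) (Q i))
        (fun _ => 0))
    let K' : Matrix (Fin (n + 1)) (Fin (d + 1)) ℝ :=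
      Matrix.of (Fin.cons (Fin.cons 1 (fun _ => 0)) (fun j : Fin n => Fin.cons 0 (K j)))
    let V' : Matrix (Fin (n + 1)) (Fin (d + 1)) ℝ :=
      Matrix.of (Fin.cons (fun _ => 0) (fun _ : Fin n => Fin.cons 1 (fun _ => 0)))
    let S : Fin n → ℝ := fun i => ∑ j, Real.exp (∑ k, Q i k * K j k)
    (∀ i : Fin n, (Q' * K'ᵀ) i.castSucc 0 = Real.log (c i)) ∧
    (∀ i j : Fin n, (Q' * K'ᵀ) i.castSucc j.succ = ∑ k, Q i k * K j k) ∧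
    (∀ j : Fin (n + 1), (Q' * K'ᵀ) (Fin.last n) j = 0) ∧
    (∀ i : Fin n, attention Q' K' V' i.castSucc 0 = S i / (c i + S i)) := by
  intro Q' K' V' S
  have h1 : ∀ i : Fin n, (Q' * K'ᵀ) i.castSucc 0 = Real.log (c i) := by
    intro i
    simp [Q', K', Matrix.mul_apply, Fin.sum_univ_succ]
  have h2 : ∀ i j : Fin n, (Q' * K'ᵀ) i.castSucc j.succ = ∑ k, Q i k * K j k := by
    intro i j
    simp [Q', K', Matrix.mul_apply, Fin.sum_univ_succ]
  have h3 : ∀ j : Fin (n + 1), (Q' * K'ᵀ) (Fin.last n) j = 0 := by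
    intro j
    simp [Q', Matrix.mul_apply]
  refine ⟨h1, h2, h3, fun i => ?_⟩
  have hV0 : V' 0 0 = 0 := by simp [V']
  have hV1 : ∀ j : Fin n, V' j.succ 0 = 1 := fun j => by simp [V']
  -- Split off column `0` in numerator and denominator: it contributes `0` and `cᵢ` respectively.
  simp only [attention, Matrix.of_apply, Fin.sum_univ_succ, h1, h2, hV0, hV1,
    Real.exp_log (hc i), mul_zero, mul_one, zero_add, S]
end

section
/- Let n ≥ 2 and ε > 0. Let C be a positive integer satisfying 0.5·C > 1 + log_n(1 + ε) and −0.5·C < log_n(1 − ε) (in particular ε < 1). Let a_1, …, a_n, b_1, …, b_n ∈ ℤ^d be integer vectors, and for i ∈ [n] define S_i := Σ_{j=1}^n n^{C·(a_i·b_j)} and M_i := max_{j ∈ [n]} a_i·b_j. Then for any S_i' ∈ ℝ with (1 − ε)·S_i ≤ S_i' ≤ (1 + ε)·S_i, the maximum inner product is recovered exactly: M_i = ⌊ (log_n S_i')/C + 0.5 ⌋. -/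
open Finset Real

/-!
Write `M` for the maximal inner product. A single maximal term bounds the row sum `S` from
below, and each of its `n` terms is at most `n ^ (C * M)`, so it satisfies
`n ^ (C * M) ≤ S ≤ n * n ^ (C * M)`. Taking logarithms to base `n` turns this, with the
multiplicative error, into
`C * M + log_n (1 - ε) ≤ log_n S' ≤ C * M + 1 + log_n (1 + ε)`.
The two conditions on `C` say that the error terms lie strictly between `-C / 2` and `C / 2`, so
`log_n S' / C` is within `1 / 2` of the integer `M`, and rounding recovers `M`.
-/

/-- A sum of powers `x ^ (c * f j)` with `x ≥ 1`, `c ≥ 0` lies between its largest term and the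
number of terms times its largest term. -/
lemma sum_zpow_bounds {ι : Type*} [Fintype ι] (x : ℝ) (hx : 1 ≤ x) (c : ℤ) (hc : 0 ≤ c)
    (f : ι → ℤ) (M : ℤ) (hle : ∀ j, f j ≤ M) (j₀ : ι) (hj₀ : f j₀ = M) :
    x ^ (c * M) ≤ ∑ j, x ^ (c * f j) ∧
      ∑ j, x ^ (c * f j) ≤ Fintype.card ι * x ^ (c * M) := by
  have hx0 : 0 < x := by linarith
  constructor
  · rw [← hj₀]
    exact Finset.single_le_sum (f := fun j => x ^ (c * f j))
      (fun j _ => (zpow_pos hx0 _).le) (Finset.mem_univ j₀)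
  · have h := Finset.sum_le_card_nsmul Finset.univ (fun j => x ^ (c * f j)) (x ^ (c * M))
      (fun j _ => zpow_le_zpow_right₀ hx (mul_le_mul_of_nonneg_left (hle j) hc))
    simpa [nsmul_eq_mul] using h

/-- Exact recovery of the maximum inner product `Mᵢ = maxⱼ aᵢ·bⱼ` from a
`(1 ± ε)`-multiplicative approximation `Sᵢ'` of the row sum `Sᵢ = Σⱼ n^{C·(aᵢ·bⱼ)}`. -/
theorem maxIP_recovery (n d : ℕ) (hn : 2 ≤ n) (ε : ℝ) (hε0 : 0 < ε) (hε1 : ε < 1)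
    (C : ℕ) (hC0 : 0 < C)
    (hC1 : 1 + Real.logb n (1 + ε) < 0.5 * C)
    (hC2 : -(0.5 * C) < Real.logb n (1 - ε))
    (a b : Fin n → Fin d → ℤ) (i : Fin n)
    (S' : ℝ)
    (hlb : (1 - ε) * (∑ j, (n : ℝ) ^ ((C : ℤ) * ∑ k, a i k * b j k)) ≤ S')
    (hub : S' ≤ (1 + ε) * (∑ j, (n : ℝ) ^ ((C : ℤ) * ∑ k, a i k * b j k))) :
    Finset.univ.sup' (Finset.univ_nonempty_iff.mpr ⟨⟨0, by omega⟩⟩)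
        (fun j => ∑ k, a i k * b j k) =
      ⌊Real.logb n S' / C + 0.5⌋ := by
  set M : ℤ := Finset.univ.sup' (Finset.univ_nonempty_iff.mpr ⟨⟨0, by omega⟩⟩)
    (fun j => ∑ k, a i k * b j k) with hM
  obtain ⟨j₀, -, hj₀⟩ := Finset.exists_mem_eq_sup'
    (Finset.univ_nonempty_iff.mpr ⟨⟨0, by omega⟩⟩ : (Finset.univ : Finset (Fin n)).Nonempty)
    (fun j => ∑ k, a i k * b j k)
  have hle : ∀ j, ∑ k, a i k * b j k ≤ M := fun j =>
    Finset.le_sup' (fun j => ∑ k, a i k * b j k) (Finset.mem_univ j)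
  have hn1 : (1 : ℝ) < n := by exact_mod_cast hn
  have hn0 : (0 : ℝ) < n := by linarith
  have hC : (0 : ℝ) < C := by exact_mod_cast hC0
  obtain ⟨hS1, hS2⟩ := sum_zpow_bounds (n : ℝ) hn1.le (C : ℤ) (by positivity)
    (fun j => ∑ k, a i k * b j k) M hle j₀ hj₀.symm
  rw [Fintype.card_fin] at hS2
  have hP : (0 : ℝ) < (n : ℝ) ^ ((C : ℤ) * M) := zpow_pos hn0 _
  have hlogP : Real.logb n ((n : ℝ) ^ ((C : ℤ) * M)) = C * M := by
    rw [Real.logb, Real.log_zpow, mul_div_assoc, div_self (Real.log_pos hn1).ne']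
    push_cast
    ring
  have h1 : 0 < 1 - ε := by linarith
  have h2 : 0 < 1 + ε := by linarith
  have hlow : (1 - ε) * (n : ℝ) ^ ((C : ℤ) * M) ≤ S' :=
    (mul_le_mul_of_nonneg_left hS1 h1.le).trans hlb
  have hupp : S' ≤ (1 + ε) * (n * (n : ℝ) ^ ((C : ℤ) * M)) :=
    hub.trans (mul_le_mul_of_nonneg_left hS2 h2.le)
  have hS'0 : 0 < S' := (mul_pos h1 hP).trans_le hlow
  have hloglow : Real.logb n (1 - ε) + C * M ≤ Real.logb n S' := by
    rw [← hlogP, ← Real.logb_mul h1.ne' hP.ne']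
    exact Real.logb_le_logb_of_le hn1 (mul_pos h1 hP) hlow
  have hlogupp : Real.logb n S' ≤ Real.logb n (1 + ε) + (1 + C * M) := by
    rw [← hlogP]
    nth_rewrite 2 [← Real.logb_self_eq_one hn1]
    rw [← Real.logb_mul hn0.ne' hP.ne', ← Real.logb_mul h2.ne' (mul_pos hn0 hP).ne']
    exact Real.logb_le_logb_of_le hn1 hS'0 hupp
  symm
  rw [Int.floor_eq_iff]
  have h3 : (M : ℝ) - 0.5 ≤ Real.logb n S' / C := by
    rw [le_div_iff₀ hC]
    linarith
  have h4 : Real.logb n S' / C < M + 0.5 := by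
    rw [div_lt_iff₀ hC]
    linarith
  constructor <;> linarith
end

section
/- Let n ≥ 1, let a_1, …, a_n, b_1, …, b_n ∈ {0,1}^d, and let constants ε, c, k satisfy 0 < ε < c < 1 and 0 < k < (1 − c) / (n(1 + c)). For i ∈ [n] let S_i := Σ_{j=1}^n k^{a_i·b_j}, and let S_i' ∈ ℝ satisfy (1 − ε)·S_i ≤ S_i' ≤ (1 + ε)·S_i. Then: (i) if a_i·b_j ≥ 1 for all i, j ∈ [n] (no orthogonal pair), then S_i' < 1 − c for every i ∈ [n]; and (ii) if there exist i, j ∈ [n] with a_i·b_j = 0, then S_i' > 1 − c for that i. Hence the existence of an orthogonal pair among the a's and b's is determined by whether some S_i' is at least 1 − c. -/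
/-! Since `0 < k ≤ 1`, a term `k ^ (aᵢ·bⱼ)` is at most `k` when `aᵢ·bⱼ ≥ 1` and equals `1` when
`aᵢ·bⱼ = 0`. Without orthogonal pairs, `Sᵢ ≤ n k`, so `Sᵢ' ≤ (1 + c) n k < 1 - c` by the choice of
`k`; an orthogonal partner of `aᵢ` gives `Sᵢ ≥ 1`, so `Sᵢ' ≥ 1 - ε > 1 - c`. -/

open Finset

/-- Reduction from Orthogonal Vectors: with `Sᵢ = Σⱼ k^{aᵢ·bⱼ}` for 0/1 vectors and a
`(1 ± ε)`-approximation `Sᵢ'`, the existence of an orthogonal pair is determined by whether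
some `Sᵢ'` is at least `1 − c`. -/
theorem ov_detection (n d : ℕ) (hn : 1 ≤ n)
    (a b : Fin n → Fin d → ℕ) (ha : ∀ i m, a i m ≤ 1) (hb : ∀ j m, b j m ≤ 1)
    (ε c k : ℝ) (hε0 : 0 < ε) (hεc : ε < c) (hc1 : c < 1)
    (hk0 : 0 < k) (hk1 : k < (1 - c) / (n * (1 + c)))
    (S' : Fin n → ℝ)
    (hlb : ∀ i, (1 - ε) * (∑ j, k ^ (∑ m, a i m * b j m)) ≤ S' i)
    (hub : ∀ i, S' i ≤ (1 + ε) * (∑ j, k ^ (∑ m, a i m * b j m))) :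
    ((∀ i j, 1 ≤ ∑ m, a i m * b j m) → ∀ i, S' i < 1 - c) ∧
    (∀ i, (∃ j, (∑ m, a i m * b j m) = 0) → 1 - c < S' i) := by
  have hn' : (1 : ℝ) ≤ n := by exact_mod_cast hn
  have hc0 : 0 < c := hε0.trans hεc
  have hnk : k * (n * (1 + c)) < 1 - c := (lt_div_iff₀ (by positivity)).1 hk1
  constructor
  · intro h i
    have hkle : k ≤ 1 := by
      have h1 : (1 : ℝ) ≤ n * (1 + c) := by nlinarith
      nlinarith
    have hS : ∑ j, k ^ (∑ m, a i m * b j m) ≤ n * k := by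
      calc ∑ j, k ^ (∑ m, a i m * b j m) ≤ ∑ _j : Fin n, k :=
            Finset.sum_le_sum fun j _ =>
              pow_le_of_le_one hk0.le hkle (Nat.one_le_iff_ne_zero.1 (h i j))
        _ = n * k := by simp
    calc S' i ≤ (1 + ε) * (∑ j, k ^ (∑ m, a i m * b j m)) := hub i
      _ ≤ (1 + c) * (n * k) := by gcongr
      _ = k * (n * (1 + c)) := by ring
      _ < 1 - c := hnk
  · rintro i ⟨j, hj⟩
    have hS : 1 ≤ ∑ j, k ^ (∑ m, a i m * b j m) := by
      calc (1 : ℝ) = k ^ (∑ m, a i m * b j m) := by rw [hj, pow_zero]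
        _ ≤ ∑ j, k ^ (∑ m, a i m * b j m) :=
            Finset.single_le_sum (f := fun j => k ^ (∑ m, a i m * b j m))
              (fun _ _ => by positivity) (Finset.mem_univ j)
    calc 1 - c < (1 - ε) * 1 := by linarith
      _ ≤ (1 - ε) * (∑ j, k ^ (∑ m, a i m * b j m)) :=
          mul_le_mul_of_nonneg_left hS (by linarith)
      _ ≤ S' i := hlb i
end
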